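/- Let (A,b) be a unital A∞-algebra over a field k of characteristic 0, and let P ∈ Hom_k((A[1])^{⊗p},A[1]) and Q ∈ Hom_k((A[1])^{⊗q},A[1]) be homogeneous normalized Hochschild cochains of degrees |P| and |Q| in C^•(A). Then, as operators on the Hochschild chain complex C_•(A), one has L_{[P,Q]} = L_P∘L_Q − (−1)^{(|P|−1)(|Q|−1)} L_Q∘L_P, where [P,Q] is the Gerstenhaber bracket. -/

import Mathlib

open Finsupp
open scoped Classical

namespace NC

variable (S : Type) [CommRing S] {κ : Type}

/-- The sign `(−1)^n` for `n : ℤ`. -/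
noncomputable def sgn (n : ℤ) : S := if Even n then 1 else -1

/-- Degree of a basis element of `A` (the unit `none` = `1_A` has degree `0`). -/
def dgO (dg : κ → ℤ) : Option κ → ℤ := fun x => x.elim 0 dg

/-- `A`: a graded vector space with homogeneous basis `Option κ` (`none` = the unit `1_A`,
`some x` of degree `dg x`). -/
abbrev Avs (κ : Type) (S : Type) [CommRing S] := Option κ →₀ S

/-- Hochschild chains `C_•(A) = A ⊗ B(Ā)`, with basis `a₀ ⊗ [a₁|…|aₙ]`
(`a₀` a basis element of `A`, the `aᵢ` basis elements of `Ā`). -/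
abbrev Cch (κ : Type) (S : Type) [CommRing S] := (Option κ × List κ) →₀ S

variable (dg : κ → ℤ)

/-- `ε` of a list of `A`-basis elements: `Σ (|a|−1)`. -/
def epsO : List (Option κ) → ℤ := fun ls => (ls.map fun x => dgO dg x - 1).sum

/-- `ε` of a list of `Ā`-basis elements: `εᵢ = Σ_{r≤i} (|a_r|−1)`. -/
def epsK : List κ → ℤ := fun ms => (ms.map fun x => dg x - 1).sum

/-- `μ_j = |a₀|−1+ε_j`. -/
def muK (a₀ : Option κ) (ms : List κ) (j : ℕ) : ℤ :=
  dgO dg a₀ - 1 + epsK dg (ms.take j)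

/-- A (component family of a) Hochschild cochain is a function on basis words; `HasArity P p`
says it is concentrated in arity `p`. -/
def HasArity (P : List (Option κ) → Avs κ S) (p : ℕ) : Prop :=
  ∀ ls, ls.length ≠ p → P ls = 0

/-- Normalized cochain: vanishes as soon as one entry is the unit `1_A`. -/
def IsNormalized (P : List (Option κ) → Avs κ S) : Prop :=
  ∀ ls, none ∈ ls → P ls = 0

/-- Homogeneous of degree `dP` in `C^•(A)`: `P[a₁|…|aₚ]` has degree `Σ(|aᵢ|−1) + dP`. -/
def IsHomog (P : List (Option κ) → Avs κ S) (dP : ℤ) : Prop :=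
  ∀ ls x, x ∈ (P ls).support → dgO dg x = epsO dg ls + dP

/-- Multilinear insertion of a general vector of `A` into a slot of a cochain. -/
noncomputable def insEval (P : List (Option κ) → Avs κ S) (pre : List (Option κ))
    (v : Avs κ S) (post : List (Option κ)) : Avs κ S :=
  v.sum fun x c => c • P (pre ++ x :: post)

/-- The Gerstenhaber insertion `P∘Q`, the inner cochain `Q` being of `C^•`-degree `dQ`:
`(P∘Q)[a₁|…|aₙ] = Σ (−1)^{(|Q|−1)ε_i} P[a₁|…|a_i|Q[a_{i+1}|…|a_{i+v}]|…|aₙ]`. -/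
noncomputable def circC (P Q : List (Option κ) → Avs κ S) (dQ : ℤ) :
    List (Option κ) → Avs κ S := fun ls =>
  ∑ i ∈ Finset.range (ls.length + 1), ∑ v ∈ Finset.range (ls.length + 1),
    if i + v ≤ ls.length then
      sgn S ((dQ - 1) * epsO dg (ls.take i)) •
        insEval S P (ls.take i) (Q ((ls.drop i).take v)) (ls.drop (i + v))
    else 0

/-- Gerstenhaber bracket `[P,Q] = P∘Q − (−1)^{(|P|−1)(|Q|−1)} Q∘P`. -/
noncomputable def gBr (P Q : List (Option κ) → Avs κ S) (dP dQ : ℤ) :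
    List (Option κ) → Avs κ S := fun ls =>
  circC S dg P Q dQ ls - sgn S ((dP - 1) * (dQ - 1)) • circC S dg Q P dP ls

/-- `v ⊗ [ms]` for a general vector `v` of `A` in the module slot of `C_•(A)`. -/
noncomputable def genA (v : Avs κ S) (ms : List κ) : Cch κ S :=
  v.sum fun x c => Finsupp.single (x, ms) c

/-- `a₀ ⊗ [pre | v̄ | post]` for a general vector `v` of `A` inserted in a bar slot (the class
of the unit `1_A` in `Ā = A/k·1_A` being zero). -/
noncomputable def genBar (a₀ : Option κ) (pre : List κ) (v : Avs κ S) (post : List κ) :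
    Cch κ S :=
  v.sum fun x c => Option.elim x 0 fun y => Finsupp.single (a₀, pre ++ y :: post) c

/-- The value of the operator `L_P` on the generator `a₀ ⊗ [a₁|…|aₙ]`:
`L_P(a₀⊗[a₁|…|aₙ]) = Σ (−1)^{(|P|−1)μ_j} a₀⊗[a₁|…|a_j|P[a_{j+1}|…|a_{j+l}]|…|aₙ]
 + Σ (−1)^{μ_i(μ_n−μ_i)} s⁻¹P([a_{i+1}|…|aₙ|a₀|…|a_j]) ⊗ [a_{j+1}|…|a_i]`
(the second sum over the cyclic terms in which `P` includes `a₀`). -/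
noncomputable def Lgen (P : List (Option κ) → Avs κ S) (dP : ℤ)
    (a₀ : Option κ) (ms : List κ) : Cch κ S :=
  (∑ j ∈ Finset.range (ms.length + 1), ∑ l ∈ Finset.range (ms.length + 1),
    if j + l ≤ ms.length then
      sgn S ((dP - 1) * muK dg a₀ ms j) •
        genBar S a₀ (ms.take j) (P (((ms.drop j).take l).map some)) (ms.drop (j + l))
    else 0)
  + ∑ i ∈ Finset.range (ms.length + 1), ∑ j ∈ Finset.range (ms.length + 1),
      if j ≤ i then
        sgn S (muK dg a₀ ms i * (muK dg a₀ ms ms.length - muK dg a₀ ms i)) •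
          genA S (P ((ms.drop i).map some ++ a₀ :: (ms.take j).map some))
            ((ms.drop j).take (i - j))
      else 0

/-- The operator `L_P : C_•(A) → C_•(A)` associated to a cochain `P` of `C^•`-degree `dP`. -/
noncomputable def Lop (P : List (Option κ) → Avs κ S) (dP : ℤ) : Cch κ S →ₗ[S] Cch κ S :=
  Finsupp.lift (Cch κ S) S (Option κ × List κ) fun g => Lgen S dg P dP g.1 g.2

/-- The Hochschild boundary `∂_Hoch` of the (curved) A∞-structure `b` (a degree `2` cochain):
it is given on generators by exactly the formula `L_b`. -/
noncomputable def hochOp (b : List (Option κ) → Avs κ S) : Cch κ S →ₗ[S] Cch κ S :=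
  Lop S dg b 2

/-- `a ⊗ [ls]` where the bar entries are allowed to be unit basis elements (which die in
`Ā`). -/
noncomputable def genO (a : Option κ) (ls : List (Option κ)) : Cch κ S :=
  if none ∈ ls then 0 else Finsupp.single (a, ls.reduceOption) 1

/-- Connes' operator `B` on generators:
`B(a₀⊗[a₁|…|aₙ]) = Σᵢ (−1)^{(ε_{i−1}+|a₀|−1)(ε_n−ε_{i−1})} 1_A⊗[a_i|…|aₙ|a₀|a₁|…|a_{i−1}]`. -/
noncomputable def Bgen (a₀ : Option κ) (ms : List κ) : Cch κ S :=
  ∑ i ∈ Finset.range (ms.length + 1),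
    sgn S ((epsK dg (ms.take (i - 1)) + dgO dg a₀ - 1) *
        (epsK dg ms - epsK dg (ms.take (i - 1)))) •
      genO S none (((a₀ :: ms.map some).drop i) ++ ((a₀ :: ms.map some).take i))

/-- Connes' operator `B : C_•(A) → C_•(A)`. -/
noncomputable def Bop : Cch κ S →ₗ[S] Cch κ S :=
  Finsupp.lift (Cch κ S) S (Option κ × List κ) fun g => Bgen S dg g.1 g.2

/-- A unital curved A∞-structure on `A` (components `b` of the degree `1` coderivation `b` of
`BA`, written with values in `A`): homogeneity, `b∘b = 0`, and the unit axioms. -/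
structure IsUnitalCurvedAInf (b : List (Option κ) → Avs κ S) : Prop where
  homog : IsHomog S dg b 2
  sq : ∀ ls, circC S dg b b 2 ls = 0
  unit1 : b [none] = 0
  unitR : ∀ x : Option κ, b [x, none] = sgn S (dgO dg x) • Finsupp.single x 1
  unitL : ∀ x : Option κ, b [none, x] = Finsupp.single x 1
  unitHi : ∀ ls, 3 ≤ ls.length → none ∈ ls → b ls = 0

/-- A unital A∞-structure: a unital curved A∞-structure with `b₀ = 0`. -/
structure IsUnitalAInf (b : List (Option κ) → Avs κ S) extends
    IsUnitalCurvedAInf S dg b : Prop where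
  curv0 : b [] = 0

end NC

/-!
Write `L_P = B_P + C_P`, where `B_P` applies `P` to the bar slots only and `C_P` consists of the
cyclic terms, in which `P` swallows the module slot.

In `B_P B_Q` the output of `Q` either lies inside the argument of `P`, which gives `B_{P∘Q}`, or the
two arguments are disjoint, and the disjoint terms cancel in the commutator. Hence
`[B_P, B_Q] = B_{[P,Q]}`.

In `C_{P∘Q}` the argument of `Q` either contains the module slot, which gives `C_P C_Q`, or lies on
one side of it. The latter are the terms of `C_P B_Q` in which `P` swallows the output of `Q`; in
the remaining ones `Q` acts on bar slots left untouched by `P`, which is `± B_Q C_P`. Hence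
`C_{P∘Q} = C_P C_Q + C_P B_Q - (-1)^((|P|-1)(|Q|-1)) B_Q C_P`, and the theorem follows by
antisymmetrizing in `P` and `Q`.

Normalization lets `B_P` and `C_P` be evaluated by the same formula on words containing the unit,
which represent zero chains.
-/

namespace NC

section Splittings

variable {α β M N : Type*} [AddCommMonoid M] [AddCommMonoid N]

/-- Sum over all splittings `w = x ++ y` of a word in two (possibly empty) pieces. -/
def splitSum₂ (F : List α → List α → M) (w : List α) : M :=
  ∑ i ∈ Finset.range (w.length + 1), F (w.take i) (w.drop i)

/-- Sum over all splittings `w = x ++ y ++ z` of a word in three pieces. -/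
def splitSum₃ (F : List α → List α → List α → M) (w : List α) : M :=
  splitSum₂ (fun x r => splitSum₂ (F x) r) w

/-- Sum over all splittings of a word in five pieces. -/
def splitSum₅ (F : List α → List α → List α → List α → List α → M) (w : List α) : M :=
  splitSum₃ (fun x y r => splitSum₃ (F x y) r) w

theorem splitSum₂_nil (F : List α → List α → M) : splitSum₂ F [] = F [] [] := by
  simp [splitSum₂]

theorem splitSum₂_cons (F : List α → List α → M) (a : α) (w : List α) :
    splitSum₂ F (a :: w) = F [] (a :: w) + splitSum₂ (fun x y => F (a :: x) y) w := by
  rw [splitSum₂, List.length_cons, Finset.sum_range_succ', add_comm]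
  simp [splitSum₂]

theorem splitSum₂_congr {F G : List α → List α → M} {w : List α}
    (h : ∀ x y, w = x ++ y → F x y = G x y) : splitSum₂ F w = splitSum₂ G w :=
  Finset.sum_congr rfl fun i _ => h _ _ (List.take_append_drop i w).symm

theorem splitSum₃_congr {F G : List α → List α → List α → M} {w : List α}
    (h : ∀ x y z, w = x ++ (y ++ z) → F x y z = G x y z) : splitSum₃ F w = splitSum₃ G w :=
  splitSum₂_congr fun x _ hw => splitSum₂_congr fun y z hr => h x y z (by rw [hw, hr])

theorem splitSum₃_eq_zero {F : List α → List α → List α → M} {w : List α}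
    (h : ∀ x y z, w = x ++ (y ++ z) → F x y z = 0) : splitSum₃ F w = 0 :=
  (splitSum₃_congr h).trans (by simp [splitSum₃, splitSum₂])

theorem splitSum₂_add (F G : List α → List α → M) (w : List α) :
    splitSum₂ (fun x y => F x y + G x y) w = splitSum₂ F w + splitSum₂ G w :=
  Finset.sum_add_distrib

theorem splitSum₃_add (F G : List α → List α → List α → M) (w : List α) :
    splitSum₃ (fun x y z => F x y z + G x y z) w = splitSum₃ F w + splitSum₃ G w := by
  simp only [splitSum₃, splitSum₂_add]

theorem map_splitSum₂ {T : Type*} [FunLike T M N] [AddMonoidHomClass T M N] (f : T)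
    (F : List α → List α → M) (w : List α) :
    f (splitSum₂ F w) = splitSum₂ (fun x y => f (F x y)) w :=
  map_sum f _ _

theorem map_splitSum₃ {T : Type*} [FunLike T M N] [AddMonoidHomClass T M N] (f : T)
    (F : List α → List α → List α → M) (w : List α) :
    f (splitSum₃ F w) = splitSum₃ (fun x y z => f (F x y z)) w := by
  simp only [splitSum₃, map_splitSum₂]

theorem smul_splitSum₂ {R : Type*} [DistribSMul R M] (r : R) (F : List α → List α → M)
    (w : List α) : r • splitSum₂ F w = splitSum₂ (fun x y => r • F x y) w :=
  Finset.smul_sum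

theorem smul_splitSum₃ {R : Type*} [DistribSMul R M] (r : R)
    (F : List α → List α → List α → M) (w : List α) :
    r • splitSum₃ F w = splitSum₃ (fun x y z => r • F x y z) w := by
  simp only [splitSum₃, smul_splitSum₂]

theorem smul_splitSum₅ {R : Type*} [DistribSMul R M] (r : R)
    (F : List α → List α → List α → List α → List α → M) (w : List α) :
    r • splitSum₅ F w = splitSum₅ (fun x y z u v => r • F x y z u v) w := by
  simp only [splitSum₅, smul_splitSum₃]

theorem splitSum₂_list_map (g : β → α) (F : List α → List α → M) (w : List β) :
    splitSum₂ F (w.map g) = splitSum₂ (fun x y => F (x.map g) (y.map g)) w := by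
  simp [splitSum₂]

theorem splitSum₃_list_map (g : β → α) (F : List α → List α → List α → M) (w : List β) :
    splitSum₃ F (w.map g) = splitSum₃ (fun x y z => F (x.map g) (y.map g) (z.map g)) w := by
  simp only [splitSum₃, splitSum₂_list_map]

theorem splitSum₂_splitSum₂_left (F : List α → List α → List α → List α → M) (w : List α) :
    splitSum₂ (fun l z => splitSum₂ (fun x y => F l x y z) l) w =
      splitSum₂ (fun x r => splitSum₂ (fun y z => F (x ++ y) x y z) r) w := by
  induction w generalizing F with
  | nil => simp only [splitSum₂_nil, List.append_nil]
  | cons a w ih =>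
    simp only [splitSum₂_cons, splitSum₂_add, splitSum₂_nil, ih, List.nil_append,
      List.cons_append]
    abel

theorem splitSum₃_eq_left (F : List α → List α → List α → M) (w : List α) :
    splitSum₃ F w = splitSum₂ (fun l z => splitSum₂ (fun x y => F x y z) l) w :=
  (splitSum₂_splitSum₂_left (fun _ => F) w).symm

theorem splitSum₃_splitSum₃_first
    (F : List α → List α → List α → List α → List α → List α → M) (w : List α) :
    splitSum₃ (fun x y z => splitSum₃ (fun x₁ x₂ x₃ => F x x₁ x₂ x₃ y z) x) w =
      splitSum₅ (fun x₁ x₂ x₃ y z => F (x₁ ++ (x₂ ++ x₃)) x₁ x₂ x₃ y z) w := by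
  rw [splitSum₃_eq_left]
  simp only [splitSum₅, splitSum₃, splitSum₂_splitSum₂_left]

theorem splitSum₃_splitSum₃_middle
    (F : List α → List α → List α → List α → List α → List α → M) (w : List α) :
    splitSum₃ (fun x y z => splitSum₃ (fun y₁ y₂ y₃ => F x y y₁ y₂ y₃ z) y) w =
      splitSum₅ (fun x y₁ y₂ y₃ z => F x (y₁ ++ (y₂ ++ y₃)) y₁ y₂ y₃ z) w := by
  simp only [splitSum₅, splitSum₃, splitSum₂_splitSum₂_left]

theorem splitSum₃_splitSum₃_last
    (F : List α → List α → List α → List α → List α → List α → M) (w : List α) :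
    splitSum₃ (fun x y z => splitSum₃ (fun z₁ z₂ z₃ => F x y z z₁ z₂ z₃) z) w =
      splitSum₅ (fun x y z₁ z₂ z₃ => F x y (z₁ ++ (z₂ ++ z₃)) z₁ z₂ z₃) w :=
  splitSum₃_congr fun _ _ _ _ => splitSum₃_congr fun _ _ _ hz => by rw [hz]

theorem splitSum₃_splitSum₂_outer
    (F : List α → List α → List α → List α → List α → List α → List α → M) (w : List α) :
    splitSum₃ (fun x y z => splitSum₂ (fun x₁ x₂ =>
        splitSum₂ (fun z₁ z₂ => F x z x₁ x₂ y z₁ z₂) z) x) w =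
      splitSum₅ (fun x₁ x₂ y z₁ z₂ => F (x₁ ++ x₂) (z₁ ++ z₂) x₁ x₂ y z₁ z₂) w := by
  have split_last (x₁ x₂ y z : List α) :
      splitSum₂ (fun z₁ z₂ => F (x₁ ++ x₂) z x₁ x₂ y z₁ z₂) z =
        splitSum₂ (fun z₁ z₂ => F (x₁ ++ x₂) (z₁ ++ z₂) x₁ x₂ y z₁ z₂) z :=
    splitSum₂_congr fun _ _ hz => by rw [hz]
  rw [splitSum₃_eq_left]
  simp only [splitSum₅, splitSum₃, splitSum₂_splitSum₂_left, split_last]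

theorem splitSum₃_splitSum₂_outer_comm
    (F : List α → List α → List α → List α → List α → List α → List α → M) (w : List α) :
    splitSum₃ (fun x y z => splitSum₂ (fun z₁ z₂ =>
        splitSum₂ (fun x₁ x₂ => F x z x₁ x₂ y z₁ z₂) x) z) w =
      splitSum₅ (fun x₁ x₂ y z₁ z₂ => F (x₁ ++ x₂) (z₁ ++ z₂) x₁ x₂ y z₁ z₂) w := by
  rw [← splitSum₃_splitSum₂_outer]
  exact splitSum₃_congr fun _ _ _ _ => Finset.sum_comm

theorem splitSum₂_append_cons (F : List α → List α → M) (x : List α) (c : α) (z : List α) :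
    splitSum₂ F (x ++ c :: z) = splitSum₂ (fun x₁ x₂ => F x₁ (x₂ ++ c :: z)) x +
      splitSum₂ (fun z₁ z₂ => F (x ++ c :: z₁) z₂) z := by
  induction x generalizing F with
  | nil => simp only [List.nil_append, splitSum₂_cons, splitSum₂_nil]
  | cons a x ih => simp only [List.cons_append, splitSum₂_cons, ih, add_assoc]

theorem splitSum₃_append_cons (F : List α → List α → List α → M) (x : List α) (c : α)
    (z : List α) :
    splitSum₃ F (x ++ c :: z) = splitSum₃ (fun x₁ x₂ x₃ => F x₁ x₂ (x₃ ++ c :: z)) x +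
      splitSum₂ (fun x₁ x₂ => splitSum₂ (fun z₁ z₂ => F x₁ (x₂ ++ c :: z₁) z₂) z) x +
      splitSum₃ (fun z₁ z₂ z₃ => F (x ++ c :: z₁) z₂ z₃) z := by
  simp only [splitSum₃, splitSum₂_append_cons, splitSum₂_add]

theorem sum_range_start_length_eq_splitSum₃ (F : List α → List α → List α → M) (w : List α) :
    (∑ i ∈ Finset.range (w.length + 1), ∑ v ∈ Finset.range (w.length + 1),
      if i + v ≤ w.length then F (w.take i) ((w.drop i).take v) (w.drop (i + v)) else 0) =
    splitSum₃ F w := by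
  refine Finset.sum_congr rfl fun i hi => ?_
  rw [← Finset.sum_filter]
  refine Finset.sum_congr ?_ fun v _ => by rw [List.drop_drop]
  ext v
  simp only [Finset.mem_filter, Finset.mem_range, List.length_drop] at hi ⊢
  omega

theorem sum_range_stop_start_eq_splitSum₃ (F : List α → List α → List α → M) (w : List α) :
    (∑ i ∈ Finset.range (w.length + 1), ∑ j ∈ Finset.range (w.length + 1),
      if j ≤ i then F (w.take j) ((w.drop j).take (i - j)) (w.drop i) else 0) =
    splitSum₃ F w := by
  rw [splitSum₃_eq_left]
  refine Finset.sum_congr rfl fun i hi => ?_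
  rw [← Finset.sum_filter]
  refine Finset.sum_congr ?_ fun j hj => ?_
  · ext j
    simp only [Finset.mem_filter, Finset.mem_range, List.length_take] at hi ⊢
    omega
  · have hji : j ≤ i := by
      rw [Finset.mem_range, List.length_take] at hj
      omega
    rw [List.take_take, List.drop_take, min_eq_left hji]

end Splittings

section Signs

variable {S : Type} [CommRing S] {κ : Type} (dg : κ → ℤ)

theorem sgn_mul_sgn (m n : ℤ) : sgn S m * sgn S n = sgn S (m + n) := by
  simp only [sgn, Int.even_add]
  by_cases hm : Even m <;> by_cases hn : Even n <;> simp [hm, hn]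

theorem sgn_mul_self (n : ℤ) : sgn S n * sgn S n = 1 := by
  rw [sgn_mul_sgn, sgn, if_pos (Even.add_self n)]

theorem sgn_smul_sgn_smul {M : Type*} [AddCommMonoid M] [Module S M] (m n : ℤ) (x : M) :
    sgn S m • sgn S n • x = sgn S (m + n) • x := by
  rw [smul_smul, sgn_mul_sgn]

theorem sgn_eq_sgn_of_cast_eq {m n : ℤ} (h : (m : ZMod 2) = n) : sgn S m = sgn S n := by
  have even_iff : Even m ↔ Even n := by
    rw [← ZMod.intCast_eq_zero_iff_even, ← ZMod.intCast_eq_zero_iff_even, h]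
  simp only [sgn, even_iff]

theorem epsO_append (x y : List (Option κ)) : epsO dg (x ++ y) = epsO dg x + epsO dg y := by
  simp [epsO]

theorem epsO_cons (c : Option κ) (y : List (Option κ)) :
    epsO dg (c :: y) = dgO dg c - 1 + epsO dg y := by
  simp [epsO]

theorem epsO_map_some (x : List κ) : epsO dg (x.map some) = epsK dg x := by
  simp [epsO, epsK, dgO, Function.comp_def]

theorem epsK_append (x y : List κ) : epsK dg (x ++ y) = epsK dg x + epsK dg y := by
  simp [epsK]

end Signs

section LinearCombination

variable {S ι M : Type*} [CommRing S] [AddCommMonoid M] [Module S M]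

theorem linearCombination_fun_add (f g : ι → M) (v : ι →₀ S) :
    linearCombination S (fun c => f c + g c) v =
      linearCombination S f v + linearCombination S g v :=
  DFunLike.congr_fun (map_add (bilinearCombination S S) f g) v

theorem linearCombination_fun_smul (s : S) (f : ι → M) (v : ι →₀ S) :
    linearCombination S (fun c => s • f c) v = s • linearCombination S f v :=
  DFunLike.congr_fun (map_smul (bilinearCombination S S) s f) v

theorem linearCombination_fun_sum {J : Type*} (s : Finset J) (f : J → ι → M) (v : ι →₀ S) :
    linearCombination S (fun c => ∑ j ∈ s, f j c) v =
      ∑ j ∈ s, linearCombination S (f j) v := by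
  simp only [linearCombination_apply, Finset.smul_sum, Finsupp.sum]
  exact Finset.sum_comm

theorem linearCombination_fun_splitSum₂ {α : Type*} (F : ι → List α → List α → M) (v : ι →₀ S)
    (w : List α) :
    linearCombination S (fun c => splitSum₂ (F c) w) v =
      splitSum₂ (fun x y => linearCombination S (fun c => F c x y) v) w :=
  linearCombination_fun_sum _ _ v

theorem linearCombination_fun_splitSum₃ {α : Type*} (F : ι → List α → List α → List α → M)
    (v : ι →₀ S) (w : List α) :
    linearCombination S (fun c => splitSum₃ (F c) w) v =
      splitSum₃ (fun x y z => linearCombination S (fun c => F c x y z) v) w := by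
  simp only [splitSum₃, linearCombination_fun_splitSum₂]

theorem linearCombination_comm {J : Type*} (f : ι → J → M) (v : ι →₀ S) (w : J →₀ S) :
    linearCombination S (fun c => linearCombination S (f c) w) v =
      linearCombination S (fun d => linearCombination S (fun c => f c d) v) w := by
  simp only [linearCombination_apply, Finsupp.smul_sum]
  rw [Finsupp.sum_comm]
  exact Finsupp.sum_congr fun d _ => Finsupp.sum_congr fun c _ => smul_comm _ _ _

end LinearCombination

section Cochains

variable {S : Type} [CommRing S] {κ : Type} (dg : κ → ℤ) {M : Type*} [AddCommMonoid M]
  [Module S M]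

variable {dg} in
theorem IsHomog.linearCombination_sgn_smul {Q : List (Option κ) → Avs κ S} {dQ : ℤ}
    (hQ : IsHomog S dg Q dQ) (ls : List (Option κ)) {e : Option κ → ℤ} {n : ℤ}
    (he : ∀ c, dgO dg c = epsO dg ls + dQ → e c = n) (f : Option κ → M) :
    linearCombination S (fun c => sgn S (e c) • f c) (Q ls) =
      sgn S n • linearCombination S f (Q ls) := by
  rw [← linearCombination_fun_smul]
  simp only [linearCombination_apply]
  exact Finsupp.sum_congr fun c hc => by rw [he c (hQ ls c hc)]

theorem circC_eq_splitSum₃ (P Q : List (Option κ) → Avs κ S) (dQ : ℤ) (w : List (Option κ)) :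
    circC S dg P Q dQ w = splitSum₃ (fun x y z => sgn S ((dQ - 1) * epsO dg x) •
      linearCombination S (fun c => P (x ++ c :: z)) (Q y)) w := by
  rw [← sum_range_start_length_eq_splitSum₃]
  rfl

theorem map_circC (T : Avs κ S →ₗ[S] M) (P Q : List (Option κ) → Avs κ S) (dQ : ℤ)
    (w : List (Option κ)) :
    T (circC S dg P Q dQ w) = splitSum₃ (fun x y z => sgn S ((dQ - 1) * epsO dg x) •
      linearCombination S (fun c => T (P (x ++ c :: z))) (Q y)) w := by
  simp only [circC_eq_splitSum₃, map_splitSum₃, map_smul, apply_linearCombination,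
    Function.comp_def]

theorem genO_of_none_mem (a : Option κ) {w : List (Option κ)} (h : none ∈ w) :
    genO S a w = 0 :=
  if_pos h

theorem genO_map_some (a : Option κ) (ms : List κ) :
    genO S a (ms.map some) = single (a, ms) 1 := by
  have reduceOption_map_some : (ms.map some).reduceOption = ms := by
    simp [List.reduceOption, List.filterMap_map]
  simp [genO, reduceOption_map_some]

theorem genA_eq_linearCombination (v : Avs κ S) (ms : List κ) :
    genA S v ms = linearCombination S (fun c => genO S c (ms.map some)) v := by
  simp [genA, linearCombination_apply, genO_map_some]

theorem genBar_eq_linearCombination (a : Option κ) (pre : List κ) (v : Avs κ S)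
    (post : List κ) :
    genBar S a pre v post =
      linearCombination S (fun c => genO S a (pre.map some ++ c :: post.map some)) v := by
  simp only [genBar, linearCombination_apply]
  refine Finsupp.sum_congr fun c _ => ?_
  cases c with
  | none => simp [genO_of_none_mem]
  | some y =>
    have word_eq : pre.map some ++ some y :: post.map some = (pre ++ y :: post).map some := by
      simp
    rw [word_eq, genO_map_some]
    simp

end Cochains

section Operators

variable {S : Type} [CommRing S] {κ : Type} (dg : κ → ℤ)

/-- The terms of `L_P(a ⊗ [w])` in which the cochain `P` of degree `dP` does not meet the module
slot. The word `w` may contain the unit, and `μ_j` is encoded as the degree of the word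
`a :: x` in the suspension `A[1]`. -/
noncomputable def barTerms (P : List (Option κ) → Avs κ S) (dP : ℤ) (a : Option κ)
    (w : List (Option κ)) : Cch κ S :=
  splitSum₃ (fun x y z => sgn S ((dP - 1) * epsO dg (a :: x)) •
    linearCombination S (fun c => genO S a (x ++ c :: z)) (P y)) w

/-- The cyclic terms of `L_P(a ⊗ [w])`: those in which `P` swallows the module slot, together
with a final and an initial piece of `w`. The word `w` may contain the unit. -/
noncomputable def cycTerms (P : List (Option κ) → Avs κ S) (a : Option κ)
    (w : List (Option κ)) : Cch κ S :=
  splitSum₃ (fun x y z => sgn S (epsO dg (a :: (x ++ y)) * epsO dg z) •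
    linearCombination S (fun c => genO S c y) (P (z ++ a :: x))) w

/-- The part of `L_P` acting on the bar slots only. -/
noncomputable def barOp (P : List (Option κ) → Avs κ S) (dP : ℤ) : Cch κ S →ₗ[S] Cch κ S :=
  Finsupp.lift (Cch κ S) S (Option κ × List κ) fun g => barTerms dg P dP g.1 (g.2.map some)

/-- The cyclic part of `L_P`, acting on the module slot. -/
noncomputable def cycOp (P : List (Option κ) → Avs κ S) : Cch κ S →ₗ[S] Cch κ S :=
  Finsupp.lift (Cch κ S) S (Option κ × List κ) fun g => cycTerms dg P g.1 (g.2.map some)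

variable {dg} {P Q : List (Option κ) → Avs κ S} {dP dQ : ℤ}

theorem barOp_genO_map_some (a : Option κ) (ms : List κ) :
    barOp dg P dP (genO S a (ms.map some)) = barTerms dg P dP a (ms.map some) := by
  simp [barOp, genO_map_some]

theorem cycOp_genO_map_some (a : Option κ) (ms : List κ) :
    cycOp dg P (genO S a (ms.map some)) = cycTerms dg P a (ms.map some) := by
  simp [cycOp, genO_map_some]

theorem Lgen_eq_barTerms_add_cycTerms (a : Option κ) (ms : List κ) :
    Lgen S dg P dP a ms = barTerms dg P dP a (ms.map some) + cycTerms dg P a (ms.map some) := by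
  rw [barTerms, cycTerms, splitSum₃_list_map, splitSum₃_list_map,
    ← sum_range_start_length_eq_splitSum₃, ← sum_range_stop_start_eq_splitSum₃, Lgen]
  congr 1
  · simp only [genBar_eq_linearCombination, muK, epsO_cons, epsO_map_some]
  · refine Finset.sum_congr rfl fun i _ => Finset.sum_congr rfl fun j _ => ?_
    split_ifs with hji
    · have take_eq : ms.take i = ms.take j ++ (ms.drop j).take (i - j) := by
        rw [← List.take_add, Nat.add_sub_cancel' hji]
      have epsK_eq : epsK dg ms = epsK dg (ms.take i) + epsK dg (ms.drop i) := by
        rw [← epsK_append, List.take_append_drop]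
      simp only [genA_eq_linearCombination, muK, epsO_cons, epsO_append, epsO_map_some,
        List.take_length]
      rw [epsK_eq, take_eq, epsK_append, add_sub_add_left_eq_sub, add_sub_cancel_left]
    · rfl

theorem Lop_eq_barOp_add_cycOp : Lop S dg P dP = barOp dg P dP + cycOp dg P := by
  ext1 ⟨a, ms⟩
  ext1
  simp [Lop, barOp, cycOp, Lgen_eq_barTerms_add_cycTerms]

theorem barTerms_of_none_mem (hP : IsNormalized S P) (a : Option κ) {w : List (Option κ)}
    (hw : none ∈ w) : barTerms dg P dP a w = 0 := by
  refine splitSum₃_eq_zero ?_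
  rintro x y z rfl
  by_cases hy : none ∈ y
  · rw [hP _ hy, map_zero, smul_zero]
  · have genO_eq_zero (c : Option κ) : genO S a (x ++ c :: z) = 0 :=
      genO_of_none_mem _ (by grind)
    simp [genO_eq_zero, linearCombination_apply]

theorem cycTerms_of_none_mem (hP : IsNormalized S P) (a : Option κ) {w : List (Option κ)}
    (hw : none ∈ w) : cycTerms dg P a w = 0 := by
  refine splitSum₃_eq_zero ?_
  rintro x y z rfl
  by_cases hy : none ∈ y
  · simp [genO_of_none_mem _ hy, linearCombination_apply]
  · rw [hP _ (by grind), map_zero, smul_zero]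

theorem exists_eq_map_some_of_none_notMem {w : List (Option κ)} (hw : none ∉ w) :
    ∃ ms : List κ, w = ms.map some := by
  have mem_range_some : ∀ c ∈ w, c ∈ Set.range some := fun c hc =>
    Option.ne_none_iff_exists.mp fun h => hw (h ▸ hc)
  simpa only [eq_comm] using Set.mem_range.mp ((Set.range_list_map some).symm ▸ mem_range_some)

theorem barOp_genO (hP : IsNormalized S P) (a : Option κ) (w : List (Option κ)) :
    barOp dg P dP (genO S a w) = barTerms dg P dP a w := by
  by_cases hw : none ∈ w
  · rw [genO_of_none_mem a hw, map_zero, barTerms_of_none_mem hP a hw]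
  · obtain ⟨ms, rfl⟩ := exists_eq_map_some_of_none_notMem hw
    exact barOp_genO_map_some a ms

theorem cycOp_genO (hP : IsNormalized S P) (a : Option κ) (w : List (Option κ)) :
    cycOp dg P (genO S a w) = cycTerms dg P a w := by
  by_cases hw : none ∈ w
  · rw [genO_of_none_mem a hw, map_zero, cycTerms_of_none_mem hP a hw]
  · obtain ⟨ms, rfl⟩ := exists_eq_map_some_of_none_notMem hw
    exact cycOp_genO_map_some a ms

end Operators

section Compositions

variable {S : Type} [CommRing S] {κ : Type}

theorem splitSum₅_sgn_smul_congr {α M : Type*} [AddCommMonoid M] [Module S M]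
    {m n : List α → List α → List α → List α → List α → ℤ}
    (h : ∀ x y z u v, (m x y z u v : ZMod 2) = n x y z u v)
    (F : List α → List α → List α → List α → List α → M) (w : List α) :
    splitSum₅ (fun x y z u v => sgn S (m x y z u v) • F x y z u v) w =
      splitSum₅ (fun x y z u v => sgn S (n x y z u v) • F x y z u v) w := by
  simp only [sgn_eq_sgn_of_cast_eq (h _ _ _ _ _)]

variable (dg : κ → ℤ)

/-- The terms `± a ⊗ [x | P[y] | z | Q[u] | v]` of `L_P (L_Q (a ⊗ [w]))`, where `P` and `Q` are
applied to disjoint subwords of `w`, the one for `P` coming first. -/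
noncomputable def disjointTerms (P Q : List (Option κ) → Avs κ S) (dP dQ : ℤ) (a : Option κ)
    (w : List (Option κ)) : Cch κ S :=
  splitSum₅ (fun x y z u v =>
    sgn S ((dP - 1) * epsO dg (a :: x) + (dQ - 1) * epsO dg (a :: (x ++ y ++ z))) •
    linearCombination S (fun c => linearCombination S
      (fun d => genO S a (x ++ c :: (z ++ d :: v))) (Q u)) (P y)) w

variable {dg} {P Q : List (Option κ) → Avs κ S} {dP dQ : ℤ}

theorem linearCombination_barTerms_append_cons (hQ : IsHomog S dg Q dQ) (a : Option κ)
    (x y z : List (Option κ)) :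
    linearCombination S (fun c => barTerms dg P dP a (x ++ c :: z)) (Q y) =
      splitSum₃ (fun x₁ x₂ x₃ => sgn S ((dP - 1) * epsO dg (a :: x₁)) •
        linearCombination S (fun c => linearCombination S
          (fun d => genO S a (x₁ ++ c :: (x₃ ++ d :: z))) (Q y)) (P x₂)) x +
      splitSum₂ (fun x₁ x₂ => splitSum₂ (fun z₁ z₂ => sgn S ((dP - 1) * epsO dg (a :: x₁)) •
        linearCombination S (fun c => linearCombination S
          (fun d => genO S a (x₁ ++ d :: z₂)) (P (x₂ ++ c :: z₁))) (Q y)) z) x +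
      splitSum₃ (fun z₁ z₂ z₃ =>
        sgn S ((dP - 1) * (epsO dg (a :: (x ++ y ++ z₁)) + dQ - 1)) •
        linearCombination S (fun c => linearCombination S
          (fun d => genO S a (x ++ c :: (z₁ ++ d :: z₃))) (P z₂)) (Q y)) z := by
  simp only [barTerms, splitSum₃_append_cons, linearCombination_fun_add,
    linearCombination_fun_splitSum₃, linearCombination_fun_splitSum₂]
  refine congrArg₂ (· + ·) (congrArg₂ (· + ·) ?_ ?_) ?_
  · refine splitSum₃_congr fun x₁ x₂ x₃ _ => ?_
    rw [linearCombination_fun_smul, linearCombination_comm]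
  · simp only [linearCombination_fun_smul]
  · refine splitSum₃_congr fun z₁ z₂ z₃ _ => ?_
    simp only [List.append_assoc, List.cons_append]
    refine hQ.linearCombination_sgn_smul y (fun c hc => ?_) _
    simp only [epsO_append, epsO_cons, hc]
    ring

theorem barTerms_circC (a : Option κ) (w : List (Option κ)) :
    barTerms dg (circC S dg P Q dQ) (dP + dQ - 1) a w =
      splitSum₅ (fun x y z u v =>
        sgn S ((dP + dQ - 1 - 1) * epsO dg (a :: x) + (dQ - 1) * epsO dg y) •
        linearCombination S (fun c => linearCombination S
          (fun d => genO S a (x ++ d :: v)) (P (y ++ c :: u))) (Q z)) w := by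
  simp only [barTerms, map_circC, smul_splitSum₃, sgn_smul_sgn_smul]
  exact splitSum₃_splitSum₃_middle _ w

theorem barOp_barTerms (hP : IsNormalized S P) (hQ : IsHomog S dg Q dQ) (a : Option κ)
    (w : List (Option κ)) :
    barOp dg P dP (barTerms dg Q dQ a w) =
      barTerms dg (circC S dg P Q dQ) (dP + dQ - 1) a w + disjointTerms dg P Q dP dQ a w +
        sgn S ((dP - 1) * (dQ - 1)) • disjointTerms dg Q P dQ dP a w := by
  have expand : barOp dg P dP (barTerms dg Q dQ a w) =
      splitSum₃ (fun x y z => sgn S ((dQ - 1) * epsO dg (a :: x)) •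
        linearCombination S (fun c => barTerms dg P dP a (x ++ c :: z)) (Q y)) w := by
    rw [barTerms]
    simp only [map_splitSum₃, map_smul, apply_linearCombination, Function.comp_def,
      barOp_genO hP]
  rw [expand, barTerms_circC, disjointTerms, disjointTerms]
  simp only [linearCombination_barTerms_append_cons hQ, smul_add, splitSum₃_add, smul_splitSum₃,
    smul_splitSum₂, smul_splitSum₅, sgn_smul_sgn_smul, splitSum₃_splitSum₃_first,
    splitSum₃_splitSum₂_outer, splitSum₃_splitSum₃_last]
  rw [add_comm (splitSum₅ _ w) (splitSum₅ _ w)]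
  refine congrArg₂ (· + ·) (congrArg₂ (· + ·) ?_ ?_) ?_
  all_goals
    apply splitSum₅_sgn_smul_congr
    intro x y z u v
    simp only [epsO_append, epsO_cons]
    push_cast
    grind

variable (dg P Q dQ) in
/-- The terms `± P[z | Q[u] | v | a | x] ⊗ [y]` of `L_{P∘Q}(a ⊗ [w])` in which `P` swallows the
module slot and `Q` is applied, inside the argument of `P`, to a subword preceding it. -/
noncomputable def nestedBeforeTerms (a : Option κ) (w : List (Option κ)) : Cch κ S :=
  splitSum₅ (fun x y z u v =>
    sgn S (epsO dg (a :: (x ++ y)) * epsO dg (z ++ (u ++ v)) + (dQ - 1) * epsO dg z) •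
    linearCombination S (fun c => linearCombination S (fun d => genO S d y)
      (P (z ++ c :: (v ++ a :: x)))) (Q u)) w

variable (dg P Q dQ) in
/-- The terms `± P[v | a | x | Q[y] | z] ⊗ [u]` of `L_{P∘Q}(a ⊗ [w])` in which `P` swallows the
module slot and `Q` is applied, inside the argument of `P`, to a subword following it. -/
noncomputable def nestedAfterTerms (a : Option κ) (w : List (Option κ)) : Cch κ S :=
  splitSum₅ (fun x y z u v =>
    sgn S (epsO dg (a :: (x ++ (y ++ (z ++ u)))) * epsO dg v + (dQ - 1) * epsO dg (v ++ a :: x)) •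
    linearCombination S (fun c => linearCombination S (fun d => genO S d u)
      (P (v ++ a :: (x ++ c :: z)))) (Q y)) w

theorem barOp_cycTerms (hP : IsNormalized S P) (hQ : IsHomog S dg Q dQ) (a : Option κ)
    (w : List (Option κ)) :
    barOp dg P dP (cycTerms dg Q a w) = splitSum₅ (fun x y z u v =>
      sgn S (epsO dg (a :: (x ++ (y ++ (z ++ u)))) * epsO dg v +
        (dP - 1) * (epsO dg (v ++ a :: x) + dQ - 1 + epsO dg y)) •
      linearCombination S (fun c => linearCombination S (fun d => genO S c (y ++ d :: u)) (P z))
        (Q (v ++ a :: x))) w := by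
  rw [← splitSum₃_splitSum₃_middle fun x r y z u v =>
    sgn S (epsO dg (a :: (x ++ r)) * epsO dg v +
      (dP - 1) * (epsO dg (v ++ a :: x) + dQ - 1 + epsO dg y)) •
    linearCombination S (fun c => linearCombination S (fun d => genO S c (y ++ d :: u)) (P z))
      (Q (v ++ a :: x))]
  simp only [cycTerms, map_splitSum₃, map_smul, apply_linearCombination, Function.comp_def,
    barOp_genO hP, barTerms, linearCombination_fun_splitSum₃, smul_splitSum₃,
    ← sgn_smul_sgn_smul]
  refine splitSum₃_congr fun x r v _ => splitSum₃_congr fun y z u _ => congrArg _ ?_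
  refine hQ.linearCombination_sgn_smul _ (fun c hc => ?_) _
  rw [epsO_cons, hc]

theorem cycOp_cycTerms (hP : IsNormalized S P) (hQ : IsHomog S dg Q dQ) (a : Option κ)
    (w : List (Option κ)) :
    cycOp dg P (cycTerms dg Q a w) = splitSum₅ (fun x y z u v =>
      sgn S (epsO dg (a :: (x ++ (y ++ (z ++ u)))) * epsO dg v +
        (epsO dg (v ++ a :: x) + dQ - 1 + epsO dg (y ++ z)) * epsO dg u) •
      linearCombination S (fun c => linearCombination S (fun d => genO S d z) (P (u ++ c :: y)))
        (Q (v ++ a :: x))) w := by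
  rw [← splitSum₃_splitSum₃_middle fun x r y z u v =>
    sgn S (epsO dg (a :: (x ++ r)) * epsO dg v +
      (epsO dg (v ++ a :: x) + dQ - 1 + epsO dg (y ++ z)) * epsO dg u) •
    linearCombination S (fun c => linearCombination S (fun d => genO S d z) (P (u ++ c :: y)))
      (Q (v ++ a :: x))]
  simp only [cycTerms, map_splitSum₃, map_smul, apply_linearCombination,
    Function.comp_def, cycOp_genO hP, linearCombination_fun_splitSum₃,
    smul_splitSum₃, ← sgn_smul_sgn_smul]
  refine splitSum₃_congr fun x r v _ => splitSum₃_congr fun y z u _ => congrArg _ ?_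
  refine hQ.linearCombination_sgn_smul _ (fun c hc => ?_) _
  rw [epsO_cons, hc]

theorem cycTerms_circC (hP : IsNormalized S P) (hQ : IsHomog S dg Q dQ) (a : Option κ)
    (w : List (Option κ)) :
    cycTerms dg (circC S dg P Q dQ) a w = nestedBeforeTerms dg P Q dQ a w +
      cycOp dg P (cycTerms dg Q a w) + nestedAfterTerms dg P Q dQ a w := by
  rw [cycOp_cycTerms hP hQ, nestedBeforeTerms, nestedAfterTerms]
  simp only [cycTerms, map_circC, splitSum₃_append_cons, smul_add, splitSum₃_add,
    smul_splitSum₃, smul_splitSum₂, sgn_smul_sgn_smul, splitSum₃_splitSum₃_first,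
    splitSum₃_splitSum₂_outer_comm, splitSum₃_splitSum₃_last, List.append_assoc,
    List.cons_append]
  refine congrArg₂ (· + ·) (congrArg₂ (· + ·) rfl ?_) rfl
  refine splitSum₅_sgn_smul_congr (fun x y z u v => ?_) _ w
  simp only [epsO_append, epsO_cons]
  push_cast
  grind

theorem linearCombination_cycTerms_append_cons (hQ : IsHomog S dg Q dQ) (a : Option κ)
    (x y z : List (Option κ)) :
    linearCombination S (fun c => cycTerms dg P a (x ++ c :: z)) (Q y) =
      splitSum₃ (fun x₁ x₂ x₃ =>
        sgn S (epsO dg (a :: (x₁ ++ x₂)) * (epsO dg (x₃ ++ (y ++ z)) + dQ - 1)) •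
        linearCombination S (fun c => linearCombination S (fun d => genO S d x₂)
          (P (x₃ ++ c :: (z ++ a :: x₁)))) (Q y)) x +
      splitSum₂ (fun x₁ x₂ => splitSum₂ (fun z₁ z₂ =>
        sgn S ((epsO dg (a :: (x₁ ++ (x₂ ++ (y ++ z₁)))) + dQ - 1) * epsO dg z₂) •
        linearCombination S (fun c => linearCombination S (fun d => genO S c (x₂ ++ d :: z₁))
          (Q y)) (P (z₂ ++ a :: x₁))) z) x +
      splitSum₃ (fun z₁ z₂ z₃ =>
        sgn S ((epsO dg (a :: (x ++ (y ++ (z₁ ++ z₂)))) + dQ - 1) * epsO dg z₃) •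
        linearCombination S (fun c => linearCombination S (fun d => genO S d z₂)
          (P (z₃ ++ a :: (x ++ c :: z₁)))) (Q y)) z := by
  simp only [cycTerms, splitSum₃_append_cons, linearCombination_fun_add,
    linearCombination_fun_splitSum₃, linearCombination_fun_splitSum₂, List.append_assoc,
    List.cons_append]
  refine congrArg₂ (· + ·) (congrArg₂ (· + ·) ?_ ?_) ?_
  · refine splitSum₃_congr fun x₁ x₂ x₃ _ => ?_
    refine hQ.linearCombination_sgn_smul y (fun c hc => ?_) _
    simp only [epsO_append, epsO_cons, hc]
    ring
  · refine splitSum₂_congr fun x₁ x₂ _ => splitSum₂_congr fun z₁ z₂ _ => ?_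
    rw [linearCombination_comm]
    refine hQ.linearCombination_sgn_smul y (fun c hc => ?_) _
    simp only [epsO_append, epsO_cons, hc]
    ring
  · refine splitSum₃_congr fun z₁ z₂ z₃ _ => ?_
    refine hQ.linearCombination_sgn_smul y (fun c hc => ?_) _
    simp only [epsO_append, epsO_cons, hc]
    ring

theorem cycOp_barTerms (hPn : IsNormalized S P) (hPh : IsHomog S dg P dP)
    (hQn : IsNormalized S Q) (hQh : IsHomog S dg Q dQ) (a : Option κ) (w : List (Option κ)) :
    cycOp dg P (barTerms dg Q dQ a w) = nestedBeforeTerms dg P Q dQ a w +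
      sgn S ((dP - 1) * (dQ - 1)) • barOp dg Q dQ (cycTerms dg P a w) +
        nestedAfterTerms dg P Q dQ a w := by
  have expand : cycOp dg P (barTerms dg Q dQ a w) =
      splitSum₃ (fun x y z => sgn S ((dQ - 1) * epsO dg (a :: x)) •
        linearCombination S (fun c => cycTerms dg P a (x ++ c :: z)) (Q y)) w := by
    simp only [barTerms, map_splitSum₃, map_smul, apply_linearCombination,
      Function.comp_def, cycOp_genO hPn]
  rw [expand, barOp_cycTerms hQn hPh, nestedBeforeTerms, nestedAfterTerms]
  simp only [linearCombination_cycTerms_append_cons hQh, smul_add, splitSum₃_add,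
    smul_splitSum₃, smul_splitSum₂, smul_splitSum₅, sgn_smul_sgn_smul,
    splitSum₃_splitSum₃_first, splitSum₃_splitSum₂_outer, splitSum₃_splitSum₃_last]
  refine congrArg₂ (· + ·) (congrArg₂ (· + ·) ?_ ?_) ?_
  all_goals
    apply splitSum₅_sgn_smul_congr
    intro x y z u v
    simp only [epsO_append, epsO_cons]
    push_cast
    grind

end Compositions

section Bracket

variable {S : Type} [CommRing S] {κ : Type} {dg : κ → ℤ} {P Q : List (Option κ) → Avs κ S}
  {dP dQ : ℤ}

theorem linearMap_ext_genO_map_some {M : Type*} [AddCommMonoid M] [Module S M]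
    {f g : Cch κ S →ₗ[S] M}
    (h : ∀ a (ms : List κ), f (genO S a (ms.map some)) = g (genO S a (ms.map some))) :
    f = g := by
  ext1 ⟨a, ms⟩
  ext1
  simpa only [genO_map_some, LinearMap.comp_apply, lsingle_apply] using h a ms

theorem barOp_gBr_eq_sub : barOp dg (gBr S dg P Q dP dQ) (dP + dQ - 1) =
    barOp dg (circC S dg P Q dQ) (dP + dQ - 1) -
      sgn S ((dP - 1) * (dQ - 1)) • barOp dg (circC S dg Q P dP) (dQ + dP - 1) := by
  refine linearMap_ext_genO_map_some fun a ms => ?_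
  simp [barOp_genO_map_some, barTerms, splitSum₃, splitSum₂, gBr, smul_sub, Finset.smul_sum,
    smul_comm (sgn S ((dP - 1) * (dQ - 1))), add_comm dQ dP]

theorem cycOp_gBr_eq_sub : cycOp dg (gBr S dg P Q dP dQ) =
    cycOp dg (circC S dg P Q dQ) -
      sgn S ((dP - 1) * (dQ - 1)) • cycOp dg (circC S dg Q P dP) := by
  refine linearMap_ext_genO_map_some fun a ms => ?_
  simp [cycOp_genO_map_some, cycTerms, splitSum₃, splitSum₂, gBr, smul_sub, Finset.smul_sum,
    smul_comm (sgn S ((dP - 1) * (dQ - 1)))]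

theorem barOp_gBr (hPn : IsNormalized S P) (hPh : IsHomog S dg P dP)
    (hQn : IsNormalized S Q) (hQh : IsHomog S dg Q dQ) :
    barOp dg (gBr S dg P Q dP dQ) (dP + dQ - 1) =
      barOp dg P dP ∘ₗ barOp dg Q dQ -
        sgn S ((dP - 1) * (dQ - 1)) • (barOp dg Q dQ ∘ₗ barOp dg P dP) := by
  rw [barOp_gBr_eq_sub]
  refine linearMap_ext_genO_map_some fun a ms => ?_
  simp only [LinearMap.sub_apply, LinearMap.smul_apply, LinearMap.comp_apply,
    barOp_genO_map_some, barOp_barTerms hPn hQh, barOp_barTerms hQn hPh, smul_add, smul_smul,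
    mul_comm (dQ - 1) (dP - 1), sgn_mul_self, one_smul]
  abel

theorem cycOp_circC (hPn : IsNormalized S P) (hPh : IsHomog S dg P dP)
    (hQn : IsNormalized S Q) (hQh : IsHomog S dg Q dQ) :
    cycOp dg (circC S dg P Q dQ) =
      cycOp dg P ∘ₗ cycOp dg Q + cycOp dg P ∘ₗ barOp dg Q dQ -
        sgn S ((dP - 1) * (dQ - 1)) • (barOp dg Q dQ ∘ₗ cycOp dg P) := by
  refine linearMap_ext_genO_map_some fun a ms => ?_
  simp only [LinearMap.sub_apply, LinearMap.add_apply, LinearMap.smul_apply,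
    LinearMap.comp_apply, cycOp_genO_map_some, barOp_genO_map_some, cycTerms_circC hPn hQh,
    cycOp_barTerms hPn hPh hQn hQh]
  abel

end Bracket

end NC

open NC in
theorem statement0_general {S : Type} [CommRing S] {κ : Type} (dg : κ → ℤ)
    (P Q : List (Option κ) → Avs κ S) (dP dQ : ℤ)
    (hPn : IsNormalized S P) (hPh : IsHomog S dg P dP)
    (hQn : IsNormalized S Q) (hQh : IsHomog S dg Q dQ) :
    Lop S dg (gBr S dg P Q dP dQ) (dP + dQ - 1) =
      Lop S dg P dP ∘ₗ Lop S dg Q dQ -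
        sgn S ((dP - 1) * (dQ - 1)) • (Lop S dg Q dQ ∘ₗ Lop S dg P dP) := by
  rw [Lop_eq_barOp_add_cycOp, barOp_gBr hPn hPh hQn hQh, cycOp_gBr_eq_sub,
    cycOp_circC hPn hPh hQn hQh, cycOp_circC hQn hQh hPn hPh]
  refine LinearMap.ext fun x => ?_
  simp only [Lop_eq_barOp_add_cycOp, LinearMap.add_apply, LinearMap.sub_apply,
    LinearMap.smul_apply, LinearMap.comp_apply, map_add, smul_add, smul_sub, smul_smul,
    mul_comm (dQ - 1) (dP - 1), sgn_mul_self, one_smul]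
  abel

open NC in
/-- Let `(A,b)` be a unital A∞-algebra over a field `k` of characteristic `0`
(realized on a graded vector space with homogeneous basis `Option κ`, the unit `1_A` being
the basis element `none`), and let `P`, `Q` be homogeneous normalized Hochschild cochains of
arities `p`, `q` and degrees `dP = |P|`, `dQ = |Q|` in `C^•(A)`.  Then, as operators on the
Hochschild chain complex `C_•(A)`,
`L_{[P,Q]} = L_P ∘ L_Q − (−1)^{(|P|−1)(|Q|−1)} L_Q ∘ L_P`,
where `[P,Q]` is the Gerstenhaber bracket. -/
theorem statement0 {k : Type} [Field k] [CharZero k] {κ : Type} (dg : κ → ℤ)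
    (b : List (Option κ) → Avs κ k) (hb : IsUnitalAInf k dg b)
    (P Q : List (Option κ) → Avs κ k) (p q : ℕ) (dP dQ : ℤ)
    (hPa : HasArity k P p) (hPn : IsNormalized k P) (hPh : IsHomog k dg P dP)
    (hQa : HasArity k Q q) (hQn : IsNormalized k Q) (hQh : IsHomog k dg Q dQ) :
    Lop k dg (gBr k dg P Q dP dQ) (dP + dQ - 1) =
      Lop k dg P dP ∘ₗ Lop k dg Q dQ -
        sgn k ((dP - 1) * (dQ - 1)) • (Lop k dg Q dQ ∘ₗ Lop k dg P dP) :=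
  statement0_general dg P Q dP dQ hPn hPh hQn hQh
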